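/- arXiv:1605.01581 — 2 statements merged into one kernel-verified Lean document; each statement's English description precedes it below -/
import Mathlib

section
/- Let ℓ : ℝ → ℝ be a smooth function with compact support, set p = (1/(2π)) ∫_ℝ ℓ(s) ds, and let L : ℝ → ℝ satisfy L'(s) = ℓ(s)/π for every s ∈ ℝ. Fix q ∈ ℝ and define c : ℝ → ℂ by c(t) = exp(−i q ∫_ℝ (L(s) − L(s − t)) ds). Then c is the restriction to ℝ of the entire function z ↦ exp(−2 i q p z); in particular, for every β > 0 the analytic continuation of c at the point z = iβ equals e^{2βqp}. -/
open MeasureTheory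

/-!
Writing `L s - L (s - t)` as the integral of `L'` over the window `[s - t, s]` of width `t` and
exchanging the order of integration, translation invariance gives `∫ (L s - L (s - t)) ds = t ∫ L'`
as soon as `L'` is integrable. For `L' = ℓ / π` the right-hand side is `2 p t`, so the exponent is
linear in `t` and extends to `ℂ`.
-/

section TranslationDifference

variable {E : Type*} [NormedAddCommGroup E] [NormedSpace ℝ E]

theorem integrable_uncurry_comp_sub_restrict_uIoc {f : ℝ → E} (hf : Integrable f) (a b : ℝ) :
    Integrable (Function.uncurry fun u s : ℝ => f (s - u))
      ((volume.restrict (Set.uIoc a b)).prod volume) := by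
  -- The function is the integrand of the convolution of `f` with the constant `1` on the interval.
  have one_integrable : Integrable (fun _ : ℝ => (1 : ℝ)) (volume.restrict (Set.uIoc a b)) :=
    intervalIntegrable_const.def'
  simpa [Function.comp_def, Function.uncurry_def] using
    (one_integrable.convolution_integrand (ContinuousLinearMap.lsmul ℝ ℝ) hf).swap

variable [CompleteSpace E]

theorem integral_intervalIntegral_comp_sub {f : ℝ → E} (hf : Integrable f) (a b : ℝ) :
    ∫ s, ∫ u in a..b, f (s - u) = (b - a) • ∫ s, f s :=
  calc
    ∫ s, ∫ u in a..b, f (s - u) = ∫ u in a..b, ∫ s, f (s - u) :=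
      (intervalIntegral_integral_swap (integrable_uncurry_comp_sub_restrict_uIoc hf a b)).symm
    _ = ∫ _ in a..b, ∫ s, f s := by simp only [integral_sub_right_eq_self f]
    _ = (b - a) • ∫ s, f s := intervalIntegral.integral_const _

variable {f f' : ℝ → E}

theorem sub_comp_sub_eq_intervalIntegral_of_hasDerivAt (hderiv : ∀ s, HasDerivAt f (f' s) s)
    {s t : ℝ} (hf' : IntervalIntegrable f' volume (s - t) s) :
    f s - f (s - t) = ∫ u in 0..t, f' (s - u) := by
  rw [intervalIntegral.integral_comp_sub_left f', sub_zero,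
    intervalIntegral.integral_eq_sub_of_hasDerivAt (fun x _ => hderiv x) hf']

theorem integral_sub_comp_sub_of_hasDerivAt (hderiv : ∀ s, HasDerivAt f (f' s) s)
    (hf' : Integrable f') (t : ℝ) :
    ∫ s, (f s - f (s - t)) = t • ∫ s, f' s := by
  simp only [sub_comp_sub_eq_intervalIntegral_of_hasDerivAt hderiv hf'.intervalIntegrable,
    integral_intervalIntegral_comp_sub hf', sub_zero]

end TranslationDifference

theorem chemical_potential_analytic_continuation_general
    (ℓ L : ℝ → ℝ) (hℓ : Integrable ℓ)
    (p : ℝ) (hp : p = (1 / (2 * Real.pi)) * ∫ s, ℓ s)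
    (hL : ∀ s : ℝ, HasDerivAt L (ℓ s / Real.pi) s)
    (q : ℂ)
    (c : ℝ → ℂ)
    (hc : ∀ t : ℝ, c t =
      Complex.exp (-Complex.I * q * ((∫ s, (L s - L (s - t)) : ℝ) : ℂ))) :
    Differentiable ℂ (fun z : ℂ => Complex.exp (-2 * Complex.I * q * (p : ℂ) * z)) ∧
    (∀ t : ℝ, c t = Complex.exp (-2 * Complex.I * q * (p : ℂ) * (t : ℂ))) ∧
    (∀ β : ℂ, Complex.exp (-2 * Complex.I * q * (p : ℂ) * (Complex.I * β))
        = Complex.exp (2 * β * q * p)) := by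
  have integral_deriv : ∫ s, ℓ s / Real.pi = 2 * p := by
    rw [integral_div, hp]
    field_simp
  have integral_translation_difference (t : ℝ) : ∫ s, (L s - L (s - t)) = t * (2 * p) := by
    rw [integral_sub_comp_sub_of_hasDerivAt hL (hℓ.div_const Real.pi), integral_deriv, smul_eq_mul]
  refine ⟨by fun_prop, fun t => ?_, fun β => ?_⟩
  · rw [hc, integral_translation_difference]
    push_cast
    ring_nf
  · congr 1
    linear_combination (-2 * q * p * β) * Complex.I_mul_I

/-- With `ℓ` smooth of compact support, `p = (1/(2π)) ∫ ℓ`,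
`L` a primitive of `ℓ/π` and `q ∈ ℝ`, the function
`c t = exp(-i q ∫ (L s - L (s - t)) ds)` is the restriction to `ℝ` of the
entire function `z ↦ exp(-2 i q p z)`; in particular for every `β > 0` the
analytic continuation of `c` at `z = iβ` equals `e^{2βqp}`. -/
theorem chemical_potential_analytic_continuation
    (ℓ L : ℝ → ℝ)
    (hℓ : ContDiff ℝ (⊤ : ℕ∞) ℓ)
    (hℓsupp : HasCompactSupport ℓ)
    (p : ℝ) (hp : p = (1 / (2 * Real.pi)) * ∫ s, ℓ s)
    (hL : ∀ s : ℝ, HasDerivAt L (ℓ s / Real.pi) s)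
    (q : ℝ)
    (c : ℝ → ℂ)
    (hc : ∀ t : ℝ, c t =
      Complex.exp (-Complex.I * (q : ℂ) * ((∫ s, (L s - L (s - t)) : ℝ) : ℂ))) :
    Differentiable ℂ (fun z : ℂ => Complex.exp (-2 * Complex.I * (q : ℂ) * (p : ℂ) * z)) ∧
    (∀ t : ℝ, c t = Complex.exp (-2 * Complex.I * (q : ℂ) * (p : ℂ) * (t : ℂ))) ∧
    (∀ β : ℝ, 0 < β →
      Complex.exp (-2 * Complex.I * (q : ℂ) * (p : ℂ) * (Complex.I * (β : ℂ)))
        = (Real.exp (2 * β * q * p) : ℂ)) := by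
  obtain ⟨entire, extends_c, value⟩ := chemical_potential_analytic_continuation_general ℓ L
    (hℓ.continuous.integrable_of_hasCompactSupport hℓsupp) p hp hL q c hc
  exact ⟨entire, extends_c, fun β _ => by exact_mod_cast value β⟩
end

section
/- Let A and B be unital C*-algebras with one-parameter groups of *-automorphisms τ¹ = (τ¹_t)_{t∈ℝ} and τ² = (τ²_t)_{t∈ℝ} respectively. Let φ be a β₁-KMS state for τ¹ on A and ψ a β₂-KMS state for τ² on B, and set β = min{β₁, β₂}. Then for all a, c ∈ A and b, d ∈ B there exists a function F : S̄_β → ℂ, bounded and continuous on S̄_β and holomorphic on S_β, such that F(t) = φ(a τ¹_t(c)) · ψ(b τ²_t(d)) for every t ∈ ℝ. -/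
open scoped ComplexOrder

/-- The open horizontal strip `S_β = {z : 0 < Im z < β}`. -/
def openStrip (β : ℝ) : Set ℂ := {z : ℂ | 0 < z.im ∧ z.im < β}

/-- The closed horizontal strip `S̄_β = {z : 0 ≤ Im z ≤ β}`. -/
def closedStrip (β : ℝ) : Set ℂ := {z : ℂ | 0 ≤ z.im ∧ z.im ≤ β}

/-- A state on a unital C*-algebra: a continuous linear functional `φ : A → ℂ`
with `φ (x* x) ≥ 0` for all `x` and `φ 1 = 1`. -/
def IsState (A : Type*) [NormedRing A] [StarRing A] [CStarRing A]
    [NormedAlgebra ℂ A] [CompleteSpace A] (φ : A → ℂ) : Prop :=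
  Continuous φ ∧ (∀ x y : A, φ (x + y) = φ x + φ y) ∧
    (∀ (c : ℂ) (x : A), φ (c • x) = c * φ x) ∧
    (∀ x : A, 0 ≤ φ (star x * x)) ∧ φ 1 = 1

/-- The KMS condition at inverse temperature `β` for a state `φ` with respect to a
one-parameter group `τ` of *-automorphisms. -/
def KMSCondition {A : Type*} [NormedRing A] [StarRing A] [CStarRing A]
    [NormedAlgebra ℂ A] [CompleteSpace A]
    (φ : A → ℂ) (τ : ℝ → A ≃⋆ₐ[ℂ] A) (β : ℝ) : Prop :=
  ∀ X Y : A, ∃ F : ℂ → ℂ,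
    (∃ C : ℝ, ∀ z ∈ closedStrip β, ‖F z‖ ≤ C) ∧
    ContinuousOn F (closedStrip β) ∧
    (∀ z ∈ openStrip β, DifferentiableAt ℂ F z) ∧
    (∀ t : ℝ, F (t : ℂ) = φ (X * τ t Y)) ∧
    (∀ t : ℝ, F ((t : ℂ) + (β : ℂ) * Complex.I) = φ (τ t Y * X))

section Strip

variable {E : Type*} [NormedAddCommGroup E] [NormedSpace ℂ E]
variable {R : Type*} [NormedRing R] [NormedAlgebra ℂ R]
variable {β β' β₁ β₂ : ℝ}

theorem openStrip_mono (h : β ≤ β') : openStrip β ⊆ openStrip β' :=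
  fun _ hz => ⟨hz.1, hz.2.trans_le h⟩

theorem closedStrip_mono (h : β ≤ β') : closedStrip β ⊆ closedStrip β' :=
  fun _ hz => ⟨hz.1, hz.2.trans h⟩

/-- `F` is bounded and continuous on the closed strip `S̄_β` and holomorphic on the open strip
`S_β`. As in `KMSCondition`, `F` is a total function whose values off `S̄_β` are irrelevant. -/
structure IsBoundedHolomorphicOnStrip (β : ℝ) (F : ℂ → E) : Prop where
  bounded : ∃ C : ℝ, ∀ z ∈ closedStrip β, ‖F z‖ ≤ C
  continuousOn : ContinuousOn F (closedStrip β)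
  differentiableAt : ∀ z ∈ openStrip β, DifferentiableAt ℂ F z

namespace IsBoundedHolomorphicOnStrip

theorem mono {F : ℂ → E} (hF : IsBoundedHolomorphicOnStrip β' F) (h : β ≤ β') :
    IsBoundedHolomorphicOnStrip β F where
  bounded := hF.bounded.imp fun _ hC z hz => hC z (closedStrip_mono h hz)
  continuousOn := hF.continuousOn.mono (closedStrip_mono h)
  differentiableAt z hz := hF.differentiableAt z (openStrip_mono h hz)

theorem mul {F G : ℂ → R} (hF : IsBoundedHolomorphicOnStrip β F)
    (hG : IsBoundedHolomorphicOnStrip β G) :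
    IsBoundedHolomorphicOnStrip β fun z => F z * G z where
  bounded := by
    obtain ⟨C, hC⟩ := hF.bounded
    obtain ⟨D, hD⟩ := hG.bounded
    exact ⟨C * D, fun z hz => norm_mul_le_of_le (hC z hz) (hD z hz)⟩
  continuousOn := hF.continuousOn.mul hG.continuousOn
  differentiableAt z hz := (hF.differentiableAt z hz).mul (hG.differentiableAt z hz)

end IsBoundedHolomorphicOnStrip

/-- The function `f` on the real line extends to a bounded continuous function on `S̄_β` that is
holomorphic on `S_β`; its values on the upper boundary `Im z = β` are not prescribed. -/
def HasStripExtension (β : ℝ) (f : ℝ → E) : Prop :=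
  ∃ F : ℂ → E, IsBoundedHolomorphicOnStrip β F ∧ ∀ t : ℝ, F t = f t

theorem HasStripExtension.mul {f g : ℝ → R} (hf : HasStripExtension β₁ f)
    (hg : HasStripExtension β₂ g) :
    HasStripExtension (min β₁ β₂) fun t => f t * g t := by
  obtain ⟨F, hF, hFf⟩ := hf
  obtain ⟨G, hG, hGg⟩ := hg
  exact ⟨fun z => F z * G z, (hF.mono (min_le_left _ _)).mul (hG.mono (min_le_right _ _)),
    fun t => congrArg₂ (· * ·) (hFf t) (hGg t)⟩

end Strip

/-- Condition (a), the analyticity half of the KMS condition at inverse temperature `β`: every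
correlation function `t ↦ φ (X τ_t(Y))` extends to the strip `S̄_β`. -/
def HalfKMSCondition {A : Type*} [Mul A] (φ : A → ℂ) (τ : ℝ → A → A) (β : ℝ) : Prop :=
  ∀ X Y : A, HasStripExtension β fun t => φ (X * τ t Y)

theorem KMSCondition.halfKMSCondition {A : Type*} [NormedRing A] [StarRing A] [CStarRing A]
    [NormedAlgebra ℂ A] [CompleteSpace A] {φ : A → ℂ} {τ : ℝ → A ≃⋆ₐ[ℂ] A} {β : ℝ}
    (hφ : KMSCondition φ τ β) : HalfKMSCondition φ (fun t => τ t) β := by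
  intro X Y
  obtain ⟨F, hbdd, hcont, hdiff, hreal, -⟩ := hφ X Y
  exact ⟨F, ⟨hbdd, hcont, hdiff⟩, hreal⟩

theorem product_state_half_kms_general {A B : Type*} [Mul A] [Mul B]
    {τ1 : ℝ → A → A} {τ2 : ℝ → B → B} {β₁ β₂ : ℝ} {φ : A → ℂ} {ψ : B → ℂ}
    (hφ : HalfKMSCondition φ τ1 β₁) (hψ : HalfKMSCondition ψ τ2 β₂) (a c : A) (b d : B) :
    HasStripExtension (min β₁ β₂) fun t => φ (a * τ1 t c) * ψ (b * τ2 t d) :=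
  (hφ a c).mul (hψ b d)

/-- Let `φ` be a `β₁`-KMS state for `τ1` on `A` and `ψ` a
`β₂`-KMS state for `τ2` on `B`, and set `β = min β₁ β₂`. Then for all
`a, c ∈ A`, `b, d ∈ B` there is a function `F` bounded and continuous on `S̄_β`
and holomorphic on `S_β` such that `F t = φ (a τ1_t(c)) · ψ (b τ2_t(d))` for all
real `t`. -/
theorem product_state_half_kms
    {A : Type*} [NormedRing A] [StarRing A] [CStarRing A]
    [NormedAlgebra ℂ A] [CompleteSpace A]
    {B : Type*} [NormedRing B] [StarRing B] [CStarRing B]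
    [NormedAlgebra ℂ B] [CompleteSpace B]
    (τ1 : ℝ → A ≃⋆ₐ[ℂ] A)
    (hτ1_grp : ∀ s t : ℝ, ∀ x : A, τ1 (s + t) x = τ1 s (τ1 t x))
    (hτ1_zero : ∀ x : A, τ1 0 x = x)
    (τ2 : ℝ → B ≃⋆ₐ[ℂ] B)
    (hτ2_grp : ∀ s t : ℝ, ∀ x : B, τ2 (s + t) x = τ2 s (τ2 t x))
    (hτ2_zero : ∀ x : B, τ2 0 x = x)
    (β₁ β₂ : ℝ) (hβ₁ : 0 < β₁) (hβ₂ : 0 < β₂)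
    (φ : A → ℂ) (hφ_state : IsState A φ) (hφ : KMSCondition φ τ1 β₁)
    (ψ : B → ℂ) (hψ_state : IsState B ψ) (hψ : KMSCondition ψ τ2 β₂) :
    ∀ (a c : A) (b d : B), ∃ F : ℂ → ℂ,
      (∃ C : ℝ, ∀ z ∈ closedStrip (min β₁ β₂), ‖F z‖ ≤ C) ∧
      ContinuousOn F (closedStrip (min β₁ β₂)) ∧
      (∀ z ∈ openStrip (min β₁ β₂), DifferentiableAt ℂ F z) ∧
      (∀ t : ℝ, F (t : ℂ) = φ (a * τ1 t c) * ψ (b * τ2 t d)) := by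
  intro a c b d
  obtain ⟨F, hF, hreal⟩ :=
    product_state_half_kms_general hφ.halfKMSCondition hψ.halfKMSCondition a c b d
  exact ⟨F, hF.bounded, hF.continuousOn, hF.differentiableAt, hreal⟩
end
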